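/- arXiv:2203.08731 — 2 statements merged into one kernel-verified Lean document; each statement's English description precedes it below -/
import Mathlib

section
/- Let (U, d) be a finite metric space with at least two points, and let x₁ ≠ x₂ ∈ U be two points with d(x₁, x₂) = min{d(x, y) : x, y ∈ U, x ≠ y}. Then for every real k with 0 ≤ k ≤ exp(−d(x₁, x₂)), the family 𝒯 = {X ⊆ U : mind(X) < k and x₁, x₂ ∈ X} is a mind-tangle of order k. -/
/-!
A set `X` separating `x₁` from `x₂` has linkage at least `exp (-dist x₁ x₂) ≥ k`
(`exp_neg_le_mindOf`), so every set of linkage below `k` contains both points or neither of them.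
As the linkage of a set and of its complement agree (`mindOf_compl_le`), one of the two sides of
each such bipartition belongs to the family. Any three members share `x₁`, and no singleton
contains the two distinct points.
-/

/-- A `κ`-tangle of order `k` on the finite universe `U`. -/
def IsTangle {U : Type*} [Fintype U] [DecidableEq U]
    (κ : Finset U → ℝ) (k : ℝ) (T : Set (Finset U)) : Prop :=
  0 ≤ k ∧
  (∀ X ∈ T, κ X < k) ∧
  (∀ X : Finset U, κ X < k → X ∈ T ∨ Xᶜ ∈ T) ∧
  (∀ X₁ ∈ T, ∀ X₂ ∈ T, ∀ X₃ ∈ T, (X₁ ∩ X₂ ∩ X₃ : Finset U).Nonempty) ∧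
  (∀ x : U, ({x} : Finset U) ∉ T)

/-- The maximum linkage function of a distance function `d` on a finite universe `U`. -/
noncomputable def mindOf {U : Type*} [Fintype U] [DecidableEq U]
    (d : U → U → ℝ) (X : Finset U) : ℝ :=
  if h : X.Nonempty ∧ (Xᶜ : Finset U).Nonempty then
    (X ×ˢ (Xᶜ : Finset U)).sup' (Finset.nonempty_product.mpr h)
      (fun p => Real.exp (-d p.1 p.2))
  else 0

theorem exp_neg_le_mindOf {U : Type*} [Fintype U] [DecidableEq U] (d : U → U → ℝ)
    {X : Finset U} {a b : U} (ha : a ∈ X) (hb : b ∉ X) :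
    Real.exp (-d a b) ≤ mindOf d X := by
  have hb' : b ∈ Xᶜ := Finset.mem_compl.mpr hb
  have h : X.Nonempty ∧ (Xᶜ : Finset U).Nonempty := ⟨⟨a, ha⟩, ⟨b, hb'⟩⟩
  rw [mindOf, dif_pos h]
  exact Finset.le_sup' (fun p : U × U => Real.exp (-d p.1 p.2))
    (Finset.mem_product.mpr ⟨ha, hb'⟩ : (a, b) ∈ X ×ˢ Xᶜ)

/-- One half of the invariance of the maximum linkage under complementation; the other half is
this inequality applied to `Xᶜ`. -/
theorem mindOf_compl_le {U : Type*} [Fintype U] [DecidableEq U] (d : U → U → ℝ)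
    (hd : ∀ a b, d a b = d b a) (X : Finset U) : mindOf d Xᶜ ≤ mindOf d X := by
  by_cases h : (Xᶜ : Finset U).Nonempty ∧ (Xᶜᶜ : Finset U).Nonempty
  · rw [mindOf, dif_pos h]
    refine Finset.sup'_le _ _ ?_
    rintro ⟨a, b⟩ hab
    simp only [Finset.mem_product, Finset.mem_compl, not_not] at hab
    rw [hd]
    exact exp_neg_le_mindOf d hab.2 hab.1
  · have h' : ¬ (X.Nonempty ∧ (Xᶜ : Finset U).Nonempty) := by
      rwa [compl_compl, and_comm] at h
    rw [mindOf, mindOf, dif_neg h, dif_neg h']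

/-- If `x₁ ≠ x₂` realize the minimum distance of a finite metric space `U`, then for every
`0 ≤ k ≤ exp (−d(x₁,x₂))` the family of all `X` with `mind X < k` and `x₁, x₂ ∈ X` is a
`mind`-tangle of order `k`. -/
theorem min_dist_pair_tangle {U : Type*} [Fintype U] [DecidableEq U] [MetricSpace U]
    (x₁ x₂ : U) (hne : x₁ ≠ x₂)
    (hmin : ∀ y z : U, y ≠ z → dist x₁ x₂ ≤ dist y z)
    (k : ℝ) (hk0 : 0 ≤ k) (hk : k ≤ Real.exp (-dist x₁ x₂)) :
    IsTangle (mindOf (fun x y : U => dist x y)) k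
      {X : Finset U | mindOf (fun x y : U => dist x y) X < k ∧ x₁ ∈ X ∧ x₂ ∈ X} := by
  refine ⟨hk0, fun X hX => hX.1, fun X hX => ?_, fun X₁ h₁ X₂ h₂ X₃ h₃ => ?_, fun x hx => ?_⟩
  · by_cases h₁ : x₁ ∈ X <;> by_cases h₂ : x₂ ∈ X
    · exact Or.inl ⟨hX, h₁, h₂⟩
    · have := exp_neg_le_mindOf (fun x y : U => dist x y) h₁ h₂
      exact absurd hX (not_lt.mpr (hk.trans this))
    · have := exp_neg_le_mindOf (fun x y : U => dist x y) h₂ h₁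
      rw [dist_comm] at hk
      exact absurd hX (not_lt.mpr (hk.trans this))
    · exact Or.inr ⟨(mindOf_compl_le _ dist_comm X).trans_lt hX,
        Finset.mem_compl.mpr h₁, Finset.mem_compl.mpr h₂⟩
  · exact ⟨x₁, Finset.mem_inter.mpr ⟨Finset.mem_inter.mpr ⟨h₁.2.1, h₂.2.1⟩, h₃.2.1⟩⟩
  · exact hne ((Finset.mem_singleton.mp hx.2.1).trans (Finset.mem_singleton.mp hx.2.2).symm)
end

section
/- Let κ be a maximum-submodular connectivity function on a finite set U with at least two elements. Then for every real k > 0, a κ-tangle of order k exists if and only if there is no branch decomposition of U of width less than k; consequently the tangle number tn(κ) equals the branch width bw(κ). -/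
/-- `v` is a leaf of the graph `G`: it has a unique neighbor. -/
def IsLeafV {V : Type*} (G : SimpleGraph V) (v : V) : Prop :=
  ∃ u, G.neighborSet v = {u}

/-- `G` is a ternary tree-shaped graph: every vertex is a leaf or has exactly three
neighbors. -/
def Ternary {V : Type*} (G : SimpleGraph V) : Prop :=
  ∀ v : V, IsLeafV G v ∨
    ∃ u₁ u₂ u₃ : V, u₁ ≠ u₂ ∧ u₁ ≠ u₃ ∧ u₂ ≠ u₃ ∧ G.neighborSet v = {u₁, u₂, u₃}

/-- `(T, γ)` is a pre-decomposition of the finite universe `U`. -/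
def IsPreDecomp {V U : Type*} [Fintype U] [DecidableEq U]
    (G : SimpleGraph V) (γ : V → V → Finset U) : Prop :=
  (∀ s t : V, G.Adj s t → γ s t = (γ t s)ᶜ) ∧
  (∀ s u₁ u₂ u₃ : V, G.Adj s u₁ → G.Adj s u₂ → G.Adj s u₃ →
    u₁ ≠ u₂ → u₁ ≠ u₃ → u₂ ≠ u₃ → γ s u₁ ∪ γ s u₂ ∪ γ s u₃ = Finset.univ)

/-- A branch decomposition of `U`: a ternary tree, an exact pre-decomposition, all of
whose atoms are singletons. -/
def IsBranchDecomp {V U : Type*} [Fintype U] [DecidableEq U]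
    (G : SimpleGraph V) (γ : V → V → Finset U) : Prop :=
  G.IsTree ∧ Ternary G ∧ IsPreDecomp G γ ∧
  (∀ s t₁ t₂ : V, G.Adj s t₁ → G.Adj s t₂ → t₁ ≠ t₂ → Disjoint (γ s t₁) (γ s t₂)) ∧
  (∀ ℓ s : V, IsLeafV G ℓ → G.Adj s ℓ → ∃ x : U, γ s ℓ = {x})

/-- The width of a pre-decomposition: the maximum of `κ (γ (s, t))` over directed edges. -/
noncomputable def widthOf {V U : Type*} [Fintype U] [DecidableEq U]
    (κ : Finset U → ℝ) (G : SimpleGraph V) (γ : V → V → Finset U) : ℝ :=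
  sSup {r : ℝ | ∃ s t : V, G.Adj s t ∧ r = κ (γ s t)}

/-- The tangle number: the supremum of all orders of `κ`-tangles. -/
noncomputable def tangleNumber {U : Type*} [Fintype U] [DecidableEq U]
    (κ : Finset U → ℝ) : ℝ :=
  sSup {k : ℝ | ∃ T : Set (Finset U), IsTangle κ k T}

/-- The branch width: the infimum of the widths of all branch decompositions of `U`. -/
noncomputable def branchWidth {U : Type*} [Fintype U] [DecidableEq U]
    (κ : Finset U → ℝ) : ℝ :=
  sInf {w : ℝ | ∃ (n : ℕ) (G : SimpleGraph (Fin n)) (γ : Fin n → Fin n → Finset U),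
    IsBranchDecomp G γ ∧ w = widthOf κ G γ}

/-! ### Atoms of branch decompositions -/

section Decomposition

variable {U : Type*} [Fintype U] [DecidableEq U]

/-- Every element is carried by some leaf, by counting edges: if `x` were not, every node could
choose an edge towards `x` and no two nodes would choose the same one. -/
lemma exists_edge_singleton {n : ℕ} {G : SimpleGraph (Fin n)} {γ : Fin n → Fin n → Finset U}
    (h : IsBranchDecomp G γ) (x : U) : ∃ s t, G.Adj s t ∧ γ s t = {x} := by
  classical
  obtain ⟨htree, htern, ⟨hcompl, hcover⟩, -, hatom⟩ := h
  by_contra! hno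
  -- Every node `v` has an edge pointing towards `x`.
  have key : ∀ v, ∃ u, G.Adj v u ∧ x ∈ γ v u := by
    intro v
    rcases htern v with ⟨u, hu⟩ | ⟨u₁, u₂, u₃, h12, h13, h23, hN⟩
    · have hvu : G.Adj v u := by
        rw [← SimpleGraph.mem_neighborSet, hu]; rfl
      obtain ⟨y, hy⟩ := hatom v u ⟨u, hu⟩ hvu.symm
      refine ⟨u, hvu, ?_⟩
      rw [hcompl v u hvu, hy]
      have hxy : x ≠ y := by
        rintro rfl
        exact hno u v hvu.symm hy
      simpa using hxy
    · have ha : ∀ u ∈ ({u₁, u₂, u₃} : Set (Fin n)), G.Adj v u := by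
        intro u hu
        rwa [← hN, SimpleGraph.mem_neighborSet] at hu
      have h1 := ha u₁ (by simp)
      have h2 := ha u₂ (by simp)
      have h3 := ha u₃ (by simp)
      have hx : x ∈ γ v u₁ ∪ γ v u₂ ∪ γ v u₃ := by
        rw [hcover v u₁ u₂ u₃ h1 h2 h3 h12 h13 h23]; exact Finset.mem_univ x
      simp only [Finset.mem_union] at hx
      rcases hx with (hx | hx) | hx
      exacts [⟨u₁, h1, hx⟩, ⟨u₂, h2, hx⟩, ⟨u₃, h3, hx⟩]
  choose f hf hxf using key
  -- An edge cannot point towards `x` in both directions, so `v ↦ {v, f v}` is injective.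
  have hinj : Function.Injective (fun v => (⟨s(v, f v), hf v⟩ : G.edgeSet)) := by
    intro v w hvw
    have hvw' : s(v, f v) = s(w, f w) := congrArg Subtype.val hvw
    rw [Sym2.eq_iff] at hvw'
    rcases hvw' with ⟨h, -⟩ | ⟨h1, h2⟩
    · exact h
    · exfalso
      have hw := hxf w
      rw [hcompl w (f w) (hf w), Finset.mem_compl, ← h1, ← h2] at hw
      exact hw (hxf v)
  have hcard : _ ≤ Nat.card G.edgeSet := Nat.card_le_card_of_injective _ hinj
  have := (SimpleGraph.isTree_iff_connected_and_card.1 htree).2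
  omega

/-! ### The caterpillar decomposition -/

/-- The parent function of the caterpillar on `ℕ` rooted at `0`: its spine is
`0, 1, 3, 5, …`, and each spine node `2j - 1` has the leaf `2j` as its second child.
The value at `0` is irrelevant. -/
def catParent (v : ℕ) : ℕ := if v % 2 = 0 then v - 1 else v - 2

/-- The caterpillar on `n` nodes. -/
def catGraph (n : ℕ) : SimpleGraph (Fin n) where
  Adj s t := (s.val < t.val ∧ s.val = catParent t.val) ∨ (t.val < s.val ∧ t.val = catParent s.val)
  symm := ⟨fun _ _ h => h.symm⟩
  loopless := ⟨fun v h => by rcases h with h | h <;> exact lt_irrefl _ h.1⟩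

lemma catParent_lt {v : ℕ} (hv : 0 < v) : catParent v < v := by
  unfold catParent; split_ifs <;> omega

lemma catGraph_isTree {n : ℕ} (hn : 0 < n) : (catGraph n).IsTree := by
  classical
  have hreach : ∀ m (hm : m < n), (catGraph n).Reachable ⟨0, hn⟩ ⟨m, hm⟩ := by
    intro m
    induction m using Nat.strong_induction_on with
    | _ m ih =>
      intro hm
      rcases Nat.eq_zero_or_pos m with rfl | hpos
      · exact SimpleGraph.Reachable.refl _
      · have hlt := catParent_lt hpos
        have hadj : (catGraph n).Adj ⟨catParent m, hlt.trans hm⟩ ⟨m, hm⟩ := Or.inl ⟨hlt, rfl⟩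
        exact (ih _ hlt (hlt.trans hm)).trans hadj.reachable
  have hconn : (catGraph n).Connected := by
    have : Nonempty (Fin n) := ⟨⟨0, hn⟩⟩
    refine ⟨fun a b => ?_⟩
    exact (hreach a a.2).symm.trans (hreach b b.2)
  refine SimpleGraph.isTree_iff_connected_and_card.2 ⟨hconn, ?_⟩
  refine le_antisymm ?_ hconn.card_vert_le_card_edgeSet_add_one
  -- The larger endpoint determines an edge, and it is never the root.
  have hex : ∀ e : (catGraph n).edgeSet, ∃ v : Fin n, v ≠ ⟨0, hn⟩ ∧
      ∃ s : Fin n, s.val = catParent v.val ∧ (e : Sym2 (Fin n)) = s(s, v) := by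
    rintro ⟨e, he⟩
    induction e with
    | _ a b =>
      rw [SimpleGraph.mem_edgeSet] at he
      rcases he with ⟨h1, h2⟩ | ⟨h1, h2⟩
      · exact ⟨b, fun h => by simp [h] at h1, a, h2, rfl⟩
      · exact ⟨a, fun h => by simp [h] at h1, b, h2, Sym2.eq_swap⟩
  choose g hg0 s hs he using hex
  have hinj : Function.Injective (fun e : (catGraph n).edgeSet => (⟨g e, hg0 e⟩ : {v : Fin n // v ≠ ⟨0, hn⟩})) := by
    intro e e' hee
    have h1 : g e = g e' := congrArg Subtype.val hee
    apply Subtype.ext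
    have h2 : s e = s e' := Fin.ext (by rw [hs, hs, h1])
    rw [he e, he e', h1, h2]
  have : Nat.card (catGraph n).edgeSet ≤ _ := Nat.card_le_card_of_injective _ hinj
  rw [Nat.card_eq_fintype_card (α := {v : Fin n // v ≠ ⟨0, hn⟩}),
    Fintype.card_subtype_compl, Fintype.card_subtype_eq, Fintype.card_fin] at this
  rw [Nat.card_fin]
  omega

/-- The part of the universe below node `v` of the caterpillar, for an enumeration `c` of `U`:
the leaf `2j` carries the element number `j`, and the subtree below `2j + 1` carries the elements
with larger numbers than `j`. -/
def catSet (c : U → ℕ) (v : ℕ) : Finset U :=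
  Finset.univ.filter fun x => if v % 2 = 0 then c x = v / 2 else v / 2 < c x

/-- The separations displayed by the caterpillar. -/
def catGamma (c : U → ℕ) (n : ℕ) (s t : Fin n) : Finset U :=
  if s.val < t.val then catSet c t.val else (catSet c s.val)ᶜ

lemma mem_catGamma (c : U → ℕ) {n : ℕ} (s t : Fin n) (x : U) :
    x ∈ catGamma c n s t ↔ if s.val < t.val
      then (if t.val % 2 = 0 then c x = t.val / 2 else t.val / 2 < c x)
      else ¬ (if s.val % 2 = 0 then c x = s.val / 2 else s.val / 2 < c x) := by
  unfold catGamma catSet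
  split_ifs <;> simp_all

lemma catGraph_adj {n : ℕ} (s t : Fin n) : (catGraph n).Adj s t ↔
    (t.val % 2 = 0 ∧ t.val = s.val + 1) ∨ (t.val % 2 = 1 ∧ t.val = s.val + 2) ∨
    (s.val % 2 = 0 ∧ s.val = t.val + 1) ∨ (s.val % 2 = 1 ∧ s.val = t.val + 2) ∨
    (s.val = 0 ∧ t.val = 1) ∨ (s.val = 1 ∧ t.val = 0) := by
  change (_ ∨ _) ↔ _
  unfold catParent
  split_ifs <;> omega

lemma odd_of_adj_adj {n : ℕ} {s t u : Fin n} (h1 : (catGraph n).Adj s t)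
    (h2 : (catGraph n).Adj s u) (h : t ≠ u) : s.val % 2 = 1 := by
  rw [catGraph_adj] at h1 h2
  rw [Ne, Fin.ext_iff] at h
  omega

/-- At the spine node `s = 2j - 1`, the elements with numbers `< j`, `= j` and `> j` lie towards
the parent, the leaf `s + 1` and the next spine node `s + 2`, respectively. -/
lemma mem_catGamma_of_odd (c : U → ℕ) {n : ℕ} {s t : Fin n} (hs : s.val % 2 = 1)
    (h : (catGraph n).Adj s t) (x : U) :
    (t.val = s.val - 2 ∧ (x ∈ catGamma c n s t ↔ c x ≤ s.val / 2)) ∨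
    (t.val = s.val + 1 ∧ (x ∈ catGamma c n s t ↔ c x = s.val / 2 + 1)) ∨
    (t.val = s.val + 2 ∧ (x ∈ catGamma c n s t ↔ s.val / 2 + 1 < c x)) := by
  have ht : t.val + 2 = s.val ∨ (t.val = 0 ∧ s.val = 1) ∨ t.val = s.val + 1 ∨
      t.val = s.val + 2 := by
    rw [catGraph_adj] at h
    omega
  rw [mem_catGamma]
  rcases ht with ht | ht | ht | ht
  · left; split_ifs <;> omega
  · left; split_ifs <;> omega
  · right; left; split_ifs <;> omega
  · right; right; split_ifs <;> omega

/-- The caterpillar with `2m - 2` nodes has `m` leaves: `0`, the even nodes and `2m - 3`. -/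
lemma catGraph_ternary {m : ℕ} (hm : 2 ≤ m) : Ternary (catGraph (2 * m - 2)) := by
  intro v
  have hv := v.2
  by_cases h0 : v.val = 0
  · left
    refine ⟨⟨1, by omega⟩, ?_⟩
    ext u
    rw [SimpleGraph.mem_neighborSet, catGraph_adj, Set.mem_singleton_iff, Fin.ext_iff]
    dsimp only
    omega
  by_cases h2 : v.val % 2 = 0
  · left
    refine ⟨⟨v.val - 1, by omega⟩, ?_⟩
    ext u
    rw [SimpleGraph.mem_neighborSet, catGraph_adj, Set.mem_singleton_iff, Fin.ext_iff]
    dsimp only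
    omega
  by_cases hl : v.val = 2 * m - 3
  · left
    refine ⟨⟨v.val - 2, by omega⟩, ?_⟩
    ext u
    have hu := u.2
    rw [SimpleGraph.mem_neighborSet, catGraph_adj, Set.mem_singleton_iff, Fin.ext_iff]
    dsimp only
    omega
  · right
    refine ⟨⟨v.val - 2, by omega⟩, ⟨v.val + 1, by omega⟩, ⟨v.val + 2, by omega⟩, ?_, ?_, ?_, ?_⟩
    · rw [Ne, Fin.ext_iff]; dsimp only; omega
    · rw [Ne, Fin.ext_iff]; dsimp only; omega
    · rw [Ne, Fin.ext_iff]; dsimp only; omega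
    · ext u
      have hu := u.2
      rw [SimpleGraph.mem_neighborSet, catGraph_adj, Set.mem_insert_iff, Set.mem_insert_iff,
        Set.mem_singleton_iff, Fin.ext_iff, Fin.ext_iff, Fin.ext_iff]
      dsimp only
      omega

lemma exists_branchDecomp (hcard : 1 < Fintype.card U) :
    ∃ (n : ℕ) (G : SimpleGraph (Fin n)) (γ : Fin n → Fin n → Finset U), IsBranchDecomp G γ := by
  set m := Fintype.card U with hm
  let e : U ≃ Fin m := Fintype.equivFin U
  let c : U → ℕ := fun x => (e x).val
  have hc : ∀ x, c x < m := fun x => (e x).2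
  have hcinj : ∀ x y, c x = c y → x = y := fun x y h => e.injective (Fin.ext h)
  have hcsurj : ∀ i < m, ∃ x, c x = i := fun i hi => ⟨e.symm ⟨i, hi⟩, by simp [c]⟩
  clear_value c
  refine ⟨2 * m - 2, catGraph _, catGamma c _, catGraph_isTree (by omega),
    catGraph_ternary hcard, ⟨?_, ?_⟩, ?_, ?_⟩
  · intro s t hst
    rw [catGraph_adj] at hst
    ext x
    rw [Finset.mem_compl, mem_catGamma, mem_catGamma]
    split_ifs <;> omega
  · intro s u₁ u₂ u₃ h1 h2 h3 h12 h13 h23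
    have hs := odd_of_adj_adj h1 h2 h12
    rw [Ne, Fin.ext_iff] at h12 h13 h23
    ext x
    have k1 := mem_catGamma_of_odd c hs h1 x
    have k2 := mem_catGamma_of_odd c hs h2 x
    have k3 := mem_catGamma_of_odd c hs h3 x
    simp only [Finset.mem_union, Finset.mem_univ, iff_true]
    rcases k1 with ⟨e1, k1⟩ | ⟨e1, k1⟩ | ⟨e1, k1⟩ <;>
    rcases k2 with ⟨e2, k2⟩ | ⟨e2, k2⟩ | ⟨e2, k2⟩ <;>
    rcases k3 with ⟨e3, k3⟩ | ⟨e3, k3⟩ | ⟨e3, k3⟩ <;>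
    rw [k1, k2, k3] <;> omega
  · intro s t₁ t₂ h1 h2 h12
    have hs := odd_of_adj_adj h1 h2 h12
    rw [Ne, Fin.ext_iff] at h12
    rw [Finset.disjoint_left]
    intro x hx1 hx2
    have k1 := mem_catGamma_of_odd c hs h1 x
    have k2 := mem_catGamma_of_odd c hs h2 x
    rcases k1 with ⟨e1, k1⟩ | ⟨e1, k1⟩ | ⟨e1, k1⟩ <;>
    rcases k2 with ⟨e2, k2⟩ | ⟨e2, k2⟩ | ⟨e2, k2⟩ <;>
    rw [k1] at hx1 <;> rw [k2] at hx2 <;> omega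
  · rintro l s ⟨u, hu⟩ hsl
    have hl := l.2
    have huniq : ∀ w, (catGraph (2 * m - 2)).Adj l w → w = s := by
      intro w hw
      have h1 : w ∈ (catGraph (2 * m - 2)).neighborSet l := hw
      have h2 : s ∈ (catGraph (2 * m - 2)).neighborSet l := hsl.symm
      rw [hu] at h1 h2
      rw [h1, h2]
    rw [catGraph_adj] at hsl
    -- An odd node other than `2m - 3` has two children, hence is not a leaf.
    have hodd : l.val % 2 = 1 → l.val = 2 * m - 3 := by
      intro h
      by_contra hne
      have h1 := huniq ⟨l.val + 1, by omega⟩ (by rw [catGraph_adj]; dsimp only; omega)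
      have h2 := huniq ⟨l.val + 2, by omega⟩ (by rw [catGraph_adj]; dsimp only; omega)
      rw [← h2, Fin.ext_iff] at h1
      dsimp only at h1
      omega
    obtain ⟨x, hx⟩ := hcsurj (if l.val % 2 = 0 then l.val / 2 else m - 1) (by split_ifs <;> omega)
    refine ⟨x, ?_⟩
    ext y
    rw [mem_catGamma, Finset.mem_singleton]
    have hy := hc y
    have hxy : y = x ↔ c y = c x := ⟨fun h => h ▸ rfl, hcinj y x⟩
    rw [hxy, hx]
    split_ifs <;> omega

end Decomposition

/-! ### Tangles of maximum-submodular functions -/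

section Kappa

variable {U : Type*} [Fintype U] [DecidableEq U] {κ : Finset U → ℝ}

lemma kappa_nonneg (hnorm : κ (∅ : Finset U) = 0) (hsym : ∀ X : Finset U, κ X = κ Xᶜ)
    (hmax : ∀ X Y : Finset U, max (κ (X ∩ Y)) (κ (X ∪ Y)) ≤ max (κ X) (κ Y))
    (X : Finset U) : 0 ≤ κ X := by
  have h := (le_max_left _ _).trans (hmax X Xᶜ)
  rwa [← hsym X, max_self, Finset.inter_compl, hnorm] at h

omit [Fintype U] in
/-- The sets `A` with `κ A ≤ M` are closed under unions, so it is enough to bound `κ` on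
singletons. -/
lemma kappa_le (hnorm : κ (∅ : Finset U) = 0)
    (hmax : ∀ X Y : Finset U, max (κ (X ∩ Y)) (κ (X ∪ Y)) ≤ max (κ X) (κ Y))
    {M : ℝ} (hM0 : 0 ≤ M) (hM : ∀ x, κ {x} ≤ M) (A : Finset U) : κ A ≤ M := by
  induction A using Finset.induction_on with
  | empty => rwa [hnorm]
  | insert a s _ ih =>
    rw [Finset.insert_eq]
    exact ((le_max_right _ _).trans (hmax {a} s)).trans (max_le (hM a) ih)

/-- The sets of connectivity `< k` that contain a point `x` with `k ≤ κ {x}` form a tangle. -/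
lemma exists_tangle {k : ℝ} (hk : 0 ≤ k) {x : U} (hx : k ≤ κ {x})
    (hsym : ∀ X : Finset U, κ X = κ Xᶜ) : ∃ T : Set (Finset U), IsTangle κ k T := by
  refine ⟨{X | κ X < k ∧ x ∈ X}, hk, fun X hX => hX.1, ?_, ?_, ?_⟩
  · intro X hX
    by_cases h : x ∈ X
    · exact Or.inl ⟨hX, h⟩
    · exact Or.inr ⟨by rwa [← hsym], Finset.mem_compl.2 h⟩
  · intro X₁ h₁ X₂ h₂ X₃ h₃
    exact ⟨x, by simp [h₁.2, h₂.2, h₃.2]⟩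
  · rintro y ⟨hy, hxy⟩
    rw [Finset.mem_singleton] at hxy
    subst hxy
    exact absurd hy (not_lt.2 hx)

/-- If every set has connectivity `< k`, a tangle of order `k` would contain the complement of
every singleton, hence of every set. -/
lemma not_tangle {k : ℝ} (hk : ∀ A, κ A < k) (T : Set (Finset U)) : ¬ IsTangle κ k T := by
  rintro ⟨-, -, h1, h2, h3⟩
  have hempty : (∅ : Finset U) ∉ T := fun h => by simpa using h2 _ h _ h _ h
  have hall : ∀ A : Finset U, Aᶜ ∈ T := by
    intro A
    induction A using Finset.induction_on with
    | empty => exact (h1 ∅ (hk _)).resolve_left hempty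
    | insert a s _ ih =>
      have ha : ({a} : Finset U)ᶜ ∈ T := (h1 {a} (hk _)).resolve_left (h3 a)
      refine (h1 (insert a s) (hk _)).resolve_left fun h => ?_
      obtain ⟨y, hy⟩ := h2 _ h _ ha _ ih
      simp only [Finset.mem_inter, Finset.mem_insert, Finset.mem_compl,
        Finset.mem_singleton] at hy
      tauto
  have := hall Finset.univ
  rw [Finset.compl_univ] at this
  exact hempty this

/-- Tangles of order `k ≥ 0` exist precisely up to the largest value `M` of `κ`, which is
attained on a singleton. -/
lemma exists_tangle_iff (hsym : ∀ X : Finset U, κ X = κ Xᶜ) {M : ℝ} (hM : ∀ A, κ A ≤ M)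
    {x : U} (hx : κ {x} = M) {k : ℝ} (hk : 0 ≤ k) :
    (∃ T : Set (Finset U), IsTangle κ k T) ↔ k ≤ M := by
  constructor
  · rintro ⟨T, hT⟩
    by_contra! hlt
    exact not_tangle (fun A => (hM A).trans_lt hlt) T hT
  · intro h
    exact exists_tangle hk (h.trans hx.ge) hsym

end Kappa

/-! ### Duality -/

/-- Duality between tangles and branch decompositions for maximum-submodular connectivity
functions: a tangle of order `k > 0` exists iff no branch decomposition has width `< k`;
consequently the tangle number equals the branch width. -/
theorem tangleNumber_eq_branchWidth {U : Type*} [Fintype U] [DecidableEq U]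
    (κ : Finset U → ℝ)
    (hnorm : κ (∅ : Finset U) = 0)
    (hsym : ∀ X : Finset U, κ X = κ Xᶜ)
    (hmax : ∀ X Y : Finset U, max (κ (X ∩ Y)) (κ (X ∪ Y)) ≤ max (κ X) (κ Y))
    (hcard : 1 < Fintype.card U) :
    (∀ k : ℝ, 0 < k →
      ((∃ T : Set (Finset U), IsTangle κ k T) ↔
        ¬ ∃ (n : ℕ) (G : SimpleGraph (Fin n)) (γ : Fin n → Fin n → Finset U),
          IsBranchDecomp G γ ∧ ∀ s t : Fin n, G.Adj s t → κ (γ s t) < k)) ∧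
    tangleNumber κ = branchWidth κ := by
  have : Nonempty U := Fintype.card_pos_iff.1 (by omega)
  obtain ⟨x, hx⟩ := Finite.exists_max (fun x : U => κ {x})
  obtain ⟨M, hxM⟩ : ∃ M, κ {x} = M := ⟨_, rfl⟩
  have hM0 : 0 ≤ M := hxM ▸ kappa_nonneg hnorm hsym hmax {x}
  have hM : ∀ A, κ A ≤ M := kappa_le hnorm hmax hM0 (fun y => hxM ▸ hx y)
  obtain ⟨n, G, γ, hdec⟩ := exists_branchDecomp hcard
  constructor
  · intro k hk
    rw [exists_tangle_iff hsym hM hxM hk.le]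
    constructor
    · rintro hkM ⟨n', G', γ', hdec', hw⟩
      obtain ⟨s, t, hst, hγ⟩ := exists_edge_singleton hdec' x
      have := hw s t hst
      rw [hγ, hxM] at this
      exact absurd this (not_lt.2 hkM)
    · intro h
      by_contra! hlt
      exact h ⟨n, G, γ, hdec, fun s t _ => (hM _).trans_lt hlt⟩
  · have htn : tangleNumber κ = M := by
      have : {k : ℝ | ∃ T : Set (Finset U), IsTangle κ k T} = Set.Icc 0 M := by
        ext k
        constructor
        · rintro ⟨T, hT⟩
          exact ⟨hT.1, (exists_tangle_iff hsym hM hxM hT.1).1 ⟨T, hT⟩⟩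
        · rintro ⟨h0, h1⟩
          exact (exists_tangle_iff hsym hM hxM h0).2 h1
      rw [tangleNumber, this, csSup_Icc hM0]
    have hwid : ∀ (n' : ℕ) (G' : SimpleGraph (Fin n')) (γ' : Fin n' → Fin n' → Finset U),
        IsBranchDecomp G' γ' → widthOf κ G' γ' = M := by
      intro n' G' γ' hdec'
      refine IsGreatest.csSup_eq ⟨?_, ?_⟩
      · obtain ⟨s, t, hst, hγ⟩ := exists_edge_singleton hdec' x
        exact ⟨s, t, hst, by rw [hγ, hxM]⟩
      · rintro r ⟨s, t, -, rfl⟩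
        exact hM _
    have hbw : branchWidth κ = M := by
      have : {w : ℝ | ∃ (n : ℕ) (G : SimpleGraph (Fin n)) (γ : Fin n → Fin n → Finset U),
          IsBranchDecomp G γ ∧ w = widthOf κ G γ} = {M} := by
        ext w
        constructor
        · rintro ⟨n', G', γ', hdec', rfl⟩
          exact hwid n' G' γ' hdec'
        · rintro rfl
          exact ⟨n, G, γ, hdec, (hwid n G γ hdec).symm⟩
      rw [branchWidth, this, csInf_singleton]
    rw [htn, hbw]
end
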